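/- Let f ∈ k[x] be monic of degree n ≥ 1 and let g ∈ k[x]. Then f(t^{-1}) is a unit of k((t)) and the coefficient of t^1 in g(t^{-1}) · f'(t^{-1}) · f(t^{-1})^{-1} equals the trace of the k-linear endomorphism 'multiplication by the image of g' of the finite free k-algebra k[x]/(f); that is, res((g/f) df) = trace_{(k[x]/(f))/k}(g). In particular, taking g = 1, res(f'(x) dx / f(x)) = n. -/

import Mathlib

/-!
Both sides of the residue formula equal the coefficient of `x ^ (n - 1)` in the remainder of
`g * f'` modulo `f`.

For the residue: a polynomial in `t⁻¹` has no `t`-term, so `res (p / f)` depends only on the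
remainder `r` of `p`. Multiplying numerator and denominator by `tⁿ` turns `r / f` into a quotient of
power series whose denominator has constant term `1` and whose numerator starts with `rₙ₋₁ t`.

For the trace, this is Euler's formula: for the form `p ↦ (p mod f)ₙ₋₁` on `k[x] / (f)`, the Horner
polynomials `bᵢ = fᵢ₊₁ + fᵢ₊₂ x + ⋯ + fₙ xⁿ⁻ⁱ⁻¹` are the basis dual to `1, x, …, xⁿ⁻¹`, so the trace
of `g` is the form applied to `g * ∑ i, xⁱ bᵢ`, and this sum is `f'`.
-/

section IteratedDivX

open Polynomial

variable {R : Type*} [Semiring R]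

theorem coeff_divX_iterate (p : R[X]) (i j : ℕ) : (divX^[i] p).coeff j = p.coeff (j + i) := by
  induction i generalizing j with
  | zero => rfl
  | succ i ih => rw [Function.iterate_succ_apply', coeff_divX, ih, add_right_comm, add_assoc]

theorem divX_iterate_eq_zero (p : R[X]) {i : ℕ} (hi : p.natDegree < i) : divX^[i] p = 0 := by
  ext j
  rw [coeff_divX_iterate, coeff_eq_zero_of_natDegree_lt (by lia), coeff_zero]

theorem sum_X_pow_mul_divX_iterate (p : R[X]) {n : ℕ} (hn : p.natDegree ≤ n) :
    ∑ i ∈ Finset.range n, X ^ i * divX^[i + 1] p = derivative p := by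
  induction n generalizing p with
  | zero => rw [Finset.sum_range_zero, derivative_of_natDegree_zero (Nat.le_zero.mp hn)]
  | succ n ih =>
    have hdivX : p.divX.natDegree ≤ n := by
      rw [natDegree_divX_eq_natDegree_tsub_one]; lia
    calc ∑ i ∈ Finset.range (n + 1), X ^ i * divX^[i + 1] p
        = X * ∑ i ∈ Finset.range n, X ^ i * divX^[i + 1] (divX p) + divX p := by
          simp [Finset.sum_range_succ', Finset.mul_sum, pow_succ', mul_assoc]
      _ = X * derivative (divX p) + divX p := by rw [ih _ hdivX]
      _ = derivative (X * divX p + C (p.coeff 0)) := by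
          rw [derivative_add, derivative_mul, derivative_X, derivative_C, one_mul, add_zero,
            add_comm]
      _ = derivative p := by rw [X_mul_divX_add]

end IteratedDivX

section EulerTraceFormula

open Polynomial

variable {k : Type*} [CommRing k] {f : k[X]}

theorem coeff_modByMonic_eq_zero (hf : f.Monic) (p : k[X]) {i : ℕ} (hi : f.natDegree ≤ i) :
    (p %ₘ f).coeff i = 0 := by
  nontriviality k
  exact coeff_eq_zero_of_degree_lt
    ((degree_modByMonic_lt p hf).trans_le (degree_le_of_natDegree_le hi))

theorem X_mul_modByMonic (hf : f.Monic) (p : k[X]) :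
    (X * p) %ₘ f = X * (p %ₘ f) - C ((p %ₘ f).coeff (f.natDegree - 1)) * f := by
  nontriviality k
  set r := p %ₘ f
  set c := r.coeff (f.natDegree - 1)
  have hdegree : (X * r - C c * f).degree < f.degree := by
    rw [degree_eq_natDegree hf.ne_zero, degree_lt_iff_coeff_zero]
    rintro (_ | m) hm
    · have hc : c = 0 := coeff_modByMonic_eq_zero hf p (by lia)
      simp [hc]
    · rw [coeff_sub, coeff_X_mul, coeff_C_mul]
      obtain hm | hm := hm.eq_or_lt
      · have hc : c = r.coeff m := congrArg r.coeff (by lia)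
        rw [← hm, coeff_natDegree, hf.leadingCoeff, hc, mul_one, sub_self]
      · rw [coeff_modByMonic_eq_zero hf p (by lia), coeff_eq_zero_of_natDegree_lt hm, mul_zero,
          sub_zero]
  have hdiv : X * r - C c * f + f * (X * (p /ₘ f) + C c) = X * p := by
    linear_combination X * modByMonic_add_div p f
  exact (div_modByMonic_unique _ _ hf ⟨hdiv, hdegree⟩).2

/-- `divX^[i + 1] f` is the Horner polynomial `bᵢ`, so this is the duality with `1, x, …, xⁿ⁻¹`. -/
theorem coeff_divX_iterate_mul_modByMonic (hf : f.Monic) (p : k[X]) (i : ℕ) :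
    ((divX^[i + 1] f * p) %ₘ f).coeff (f.natDegree - 1) = (p %ₘ f).coeff i := by
  obtain hi | hi := le_total f.natDegree i
  · rw [divX_iterate_eq_zero f (by lia), zero_mul, zero_modByMonic, coeff_zero,
      coeff_modByMonic_eq_zero hf p hi]
  induction hi using Nat.decreasingInduction generalizing p with
  | self =>
    rw [divX_iterate_eq_zero f (by lia), zero_mul, zero_modByMonic, coeff_zero,
      coeff_modByMonic_eq_zero hf p le_rfl]
  | of_succ i _ ih =>
    have hhorner : divX^[i + 1] f * p = divX^[i + 2] f * (X * p) + f.coeff (i + 1) • p := by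
      have h := X_mul_divX_add (divX^[i + 1] f)
      rw [coeff_divX_iterate, zero_add, ← Function.iterate_succ_apply' divX] at h
      rw [smul_eq_C_mul]
      linear_combination -p * h
    rw [hhorner, add_modByMonic, smul_modByMonic, coeff_add, ih, X_mul_modByMonic hf, coeff_sub,
      coeff_X_mul, coeff_C_mul, coeff_smul, smul_eq_mul]
    ring

theorem trace_adjoinRoot_mk_eq_sum (hf : f.Monic) (g : k[X]) :
    Algebra.trace k (AdjoinRoot f) (AdjoinRoot.mk f g) =
      ∑ i ∈ Finset.range f.natDegree, ((X ^ i * g) %ₘ f).coeff i := by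
  rw [Algebra.trace_eq_matrix_trace (AdjoinRoot.powerBasis' hf).basis, Matrix.trace,
    Finset.sum_range]
  refine Finset.sum_congr rfl fun i _ => ?_
  rw [Matrix.diag_apply, Algebra.leftMulMatrix_eq_repr_mul, PowerBasis.basis_eq_pow,
    AdjoinRoot.powerBasis'_gen, ← AdjoinRoot.mk_X, ← map_pow, ← map_mul, mul_comm]
  exact congrArg (coeff · i) (AdjoinRoot.modByMonicHom_mk hf _)

theorem trace_adjoinRoot_mk_eq_coeff (hf : f.Monic) (g : k[X]) :
    Algebra.trace k (AdjoinRoot f) (AdjoinRoot.mk f g) =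
      ((g * derivative f) %ₘ f).coeff (f.natDegree - 1) := by
  let topCoeff : k[X] →ₗ[k] k := lcoeff k (f.natDegree - 1) ∘ₗ modByMonicHom f
  calc Algebra.trace k (AdjoinRoot f) (AdjoinRoot.mk f g)
      = ∑ i ∈ Finset.range f.natDegree, ((X ^ i * g) %ₘ f).coeff i :=
        trace_adjoinRoot_mk_eq_sum hf g
    _ = ∑ i ∈ Finset.range f.natDegree, topCoeff (divX^[i + 1] f * (X ^ i * g)) :=
        Finset.sum_congr rfl fun i _ => (coeff_divX_iterate_mul_modByMonic hf _ i).symm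
    _ = topCoeff (g * ∑ i ∈ Finset.range f.natDegree, X ^ i * divX^[i + 1] f) := by
        rw [← map_sum, Finset.mul_sum]
        congr! 2
        ring
    _ = topCoeff (g * derivative f) := by rw [sum_X_pow_mul_divX_iterate f le_rfl]

theorem trace_adjoinRoot_one (hf : f.Monic) :
    Algebra.trace k (AdjoinRoot f) 1 = f.natDegree := by
  simpa using Algebra.trace_algebraMap_of_basis (AdjoinRoot.powerBasis' hf).basis 1

end EulerTraceFormula

section ExpansionAtInfinity

open Polynomial

variable {k : Type*} [CommSemiring k]

/-- The expansion at infinity `h ↦ h(t⁻¹)` of polynomials as Laurent series in the local parameter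
`t = x⁻¹`. The residue `res (F dx)`, the coefficient of `x⁻¹` in `F`, is thus `F.coeff 1`. -/
noncomputable def expandAtInfinity : k[X] →ₐ[k] LaurentSeries k :=
  aeval (HahnSeries.single (-1 : ℤ) (1 : k))

theorem expandAtInfinity_C_mul_X_pow (a : k) (m : ℕ) :
    expandAtInfinity (C a * X ^ m) = HahnSeries.single (-m : ℤ) a := by
  rw [expandAtInfinity, C_mul_X_pow_eq_monomial, aeval_monomial, HahnSeries.algebraMap_apply',
    PowerSeries.algebraMap_apply, HahnSeries.ofPowerSeries_C, HahnSeries.single_pow,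
    HahnSeries.C_apply, HahnSeries.single_mul_single, one_pow, mul_one]
  simp

theorem coeff_expandAtInfinity_of_pos (p : k[X]) {m : ℤ} (hm : 0 < m) :
    (expandAtInfinity p).coeff m = 0 := by
  rw [p.as_sum_range_C_mul_X_pow, map_sum, HahnSeries.coeff_sum]
  refine Finset.sum_eq_zero fun i _ => ?_
  rw [expandAtInfinity_C_mul_X_pow, HahnSeries.coeff_single_of_ne (by lia)]

theorem expandAtInfinity_eq_single_mul_reflect {p : k[X]} {N : ℕ} (hN : p.natDegree ≤ N) :
    expandAtInfinity p =
      HahnSeries.single (-N : ℤ) 1 * HahnSeries.ofPowerSeries ℤ k (reflect N p : k[X]) := by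
  refine induction_with_natDegree_le (fun p => expandAtInfinity p =
    HahnSeries.single (-N : ℤ) 1 * HahnSeries.ofPowerSeries ℤ k (reflect N p : k[X])) N
    (by simp) (fun m a _ hm => ?_) (fun p q _ _ hp hq => ?_) p hN
  · have hexp : (-m : ℤ) = -N + (N - m : ℕ) := by lia
    rw [expandAtInfinity_C_mul_X_pow, hexp, reflect_C_mul_X_pow, revAt_le hm, coe_mul, coe_C,
      coe_pow, coe_X, map_mul, HahnSeries.ofPowerSeries_C, HahnSeries.ofPowerSeries_X_pow,
      HahnSeries.C_apply, HahnSeries.single_mul_single, HahnSeries.single_mul_single, mul_one,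
      one_mul, zero_add]
  · rw [map_add, hp, hq, reflect_add, coe_add, map_add, mul_add]

end ExpansionAtInfinity

section ResidueAtInfinity

open Polynomial

variable {k : Type*} [CommRing k] {f : k[X]}

theorem exists_reverse_mul_eq_one (hf : f.Monic) :
    ∃ u : PowerSeries k, PowerSeries.constantCoeff u = 1 ∧ (f.reverse : PowerSeries k) * u = 1 := by
  have hconst : PowerSeries.constantCoeff (f.reverse : PowerSeries k) = (1 : kˣ) := by
    simp [hf.leadingCoeff]
  exact ⟨PowerSeries.invOfUnit f.reverse 1, by simp, PowerSeries.mul_invOfUnit _ 1 hconst⟩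

theorem isUnit_expandAtInfinity (hf : f.Monic) : IsUnit (expandAtInfinity f) := by
  obtain ⟨u, -, hu⟩ := exists_reverse_mul_eq_one hf
  rw [expandAtInfinity_eq_single_mul_reflect le_rfl]
  refine .mul (.of_mul_eq_one (HahnSeries.single (f.natDegree : ℤ) 1) ?_)
    ((IsUnit.of_mul_eq_one u hu).map _)
  simp

theorem coeff_one_expandAtInfinity_mul_inverse {r : k[X]} (hf : f.Monic)
    (hr : r.natDegree < f.natDegree) :
    (expandAtInfinity r * Ring.inverse (expandAtInfinity f)).coeff 1 =
      r.coeff (f.natDegree - 1) := by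
  obtain ⟨u, hu_const, hu⟩ := exists_reverse_mul_eq_one hf
  have hquot : HahnSeries.ofPowerSeries ℤ k (reflect f.natDegree r * u) =
      expandAtInfinity r * Ring.inverse (expandAtInfinity f) := by
    rw [Ring.eq_mul_inverse_iff_mul_eq _ _ _ (isUnit_expandAtInfinity hf),
      expandAtInfinity_eq_single_mul_reflect hr.le, expandAtInfinity_eq_single_mul_reflect le_rfl,
      mul_left_comm, ← map_mul, ← reverse, mul_assoc, mul_comm u, hu, mul_one]
  have hzero : (reflect f.natDegree r).coeff 0 = 0 := by
    rw [coeff_reflect, revAt_zero, coeff_eq_zero_of_natDegree_lt hr]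
  have hone : (reflect f.natDegree r).coeff 1 = r.coeff (f.natDegree - 1) := by
    rw [coeff_reflect, revAt_le (by lia)]
  calc (expandAtInfinity r * Ring.inverse (expandAtInfinity f)).coeff 1
      = PowerSeries.coeff 1 ((reflect f.natDegree r : PowerSeries k) * u) := by
        rw [← hquot]; exact LaurentSeries.coeff_coe_powerSeries _ 1
    _ = r.coeff (f.natDegree - 1) := by
        rw [PowerSeries.coeff_one_mul, coeff_coe, constantCoeff_coe, hzero, hone, hu_const,
          mul_one, mul_zero, add_zero]

theorem coeff_one_expandAtInfinity_mul_inverse_eq_modByMonic (hf : f.Monic) (p : k[X]) :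
    (expandAtInfinity p * Ring.inverse (expandAtInfinity f)).coeff 1 =
      (p %ₘ f).coeff (f.natDegree - 1) := by
  have hsplit : expandAtInfinity p * Ring.inverse (expandAtInfinity f) =
      expandAtInfinity (p %ₘ f) * Ring.inverse (expandAtInfinity f) +
        expandAtInfinity (p /ₘ f) := by
    nth_rw 1 [← modByMonic_add_div p f]
    rw [map_add, map_mul, add_mul, mul_right_comm,
      Ring.mul_inverse_cancel _ (isUnit_expandAtInfinity hf), one_mul]
  rw [hsplit, HahnSeries.coeff_add, coeff_expandAtInfinity_of_pos _ one_pos, add_zero]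
  by_cases hone : f = 1
  · simp [hone]
  · exact coeff_one_expandAtInfinity_mul_inverse hf (natDegree_modByMonic_lt p hf hone)

theorem residue_eq_trace (hf : f.Monic) (g : k[X]) :
    (expandAtInfinity g * expandAtInfinity (derivative f) *
        Ring.inverse (expandAtInfinity f)).coeff 1 =
      Algebra.trace k (AdjoinRoot f) (AdjoinRoot.mk f g) := by
  rw [← map_mul, coeff_one_expandAtInfinity_mul_inverse_eq_modByMonic hf,
    trace_adjoinRoot_mk_eq_coeff hf]

end ResidueAtInfinity

/-- Let `f ∈ k[x]` be monic of degree `n ≥ 1` and let `g ∈ k[x]`.  Then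
`f(t⁻¹)` is a unit of the Laurent series ring `k((t))`, the coefficient of `t^1` in
`g(t⁻¹)·f'(t⁻¹)·f(t⁻¹)⁻¹` equals the trace of the `k`-linear endomorphism "multiplication by
the image of `g`" of the finite free `k`-algebra `k[x]/(f)`, i.e.
`res((g/f) df) = trace_{(k[x]/(f))/k}(g)`; and in particular (taking `g = 1`)
`res(f'(x) dx / f(x)) = n`. -/
theorem stmt16 (k : Type*) [CommRing k] (f g : Polynomial k)
    (hf : f.Monic) (hn : 1 ≤ f.natDegree) :
    IsUnit (Polynomial.aeval (HahnSeries.single (-1 : ℤ) (1 : k) : LaurentSeries k) f) ∧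
      ((Polynomial.aeval (HahnSeries.single (-1 : ℤ) (1 : k) : LaurentSeries k) g) *
            (Polynomial.aeval (HahnSeries.single (-1 : ℤ) (1 : k) : LaurentSeries k)
              (Polynomial.derivative f)) *
          Ring.inverse
            (Polynomial.aeval (HahnSeries.single (-1 : ℤ) (1 : k) : LaurentSeries k) f)).coeff
          (1 : ℤ) =
        LinearMap.trace k (Polynomial k ⧸ Ideal.span {f})
          (LinearMap.mulLeft k (Ideal.Quotient.mk (Ideal.span {f}) g)) ∧
      ((Polynomial.aeval (HahnSeries.single (-1 : ℤ) (1 : k) : LaurentSeries k)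
              (Polynomial.derivative f)) *
          Ring.inverse
            (Polynomial.aeval (HahnSeries.single (-1 : ℤ) (1 : k) : LaurentSeries k) f)).coeff
          (1 : ℤ) =
        (f.natDegree : k) := by
  refine ⟨isUnit_expandAtInfinity hf, residue_eq_trace hf g, ?_⟩
  have hone := residue_eq_trace hf 1
  rw [map_one, one_mul, map_one, trace_adjoinRoot_one hf] at hone
  exact hone
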